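/- Let n, k ≥ 1 and Jₙ = [[0,1ₙ],[−1ₙ,0]]. On ℂ[z_{i,a} : 1 ≤ i ≤ n, 1 ≤ a ≤ k], define the 2n×2n matrix μ̂ of linear endomorphisms whose entries, for 1 ≤ i,j ≤ n, are: μ̂_{i,j} = i Σ_{a=1}^k z_{i,a} ∂/∂z_{j,a}, μ̂_{i,n+j} = (i/2)·(multiplication by Σ_{a=1}^k z_{i,a} z_{j,a}), μ̂_{n+i,j} = −2i Σ_{a=1}^k ∂/∂z_{i,a} ∘ ∂/∂z_{j,a}, and μ̂_{n+i,n+j} = −i Σ_{a=1}^k ∂/∂z_{i,a} ∘ (mult by z_{j,a}). For X ∈ Mat_{2n}(ℂ) with Xᵀ Jₙ + Jₙ X = 0, set π(X) = (i/2) Σ_{a,b=1}^{2n} μ̂_{a,b} X_{b,a}. Then: (a) π(X)∘π(Y) − π(Y)∘π(X) = π(XY − YX) for all X, Y ∈ sp_n(ℂ) (the Fock model of the oscillator representation); (b) for every g ∈ Mat_k(ℂ) with gᵀ g = 1_k, letting ρ(g) be the ℂ-algebra endomorphism determined by z_{i,a} ↦ Σ_b z_{i,b} g_{b,a}, one has ρ(g)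 ∘ π(X) = π(X) ∘ ρ(g) for all X ∈ sp_n(ℂ). -/

import Mathlib

open Matrix MvPolynomial

/-- The standard complex symplectic matrix `Jₙ = [[0, 1ₙ], [−1ₙ, 0]]`. -/
noncomputable def Jmat (n : ℕ) : Matrix (Fin n ⊕ Fin n) (Fin n ⊕ Fin n) ℂ :=
  Matrix.fromBlocks 0 1 (-1) 0

/-- The quantized moment map `μ̂` of the Fock model: a `2n×2n` matrix of linear
endomorphisms of `ℂ[z_{i,a}]` with entries
`μ̂_{i,j} = i Σ_a z_{i,a} ∂_{z_{j,a}}`, `μ̂_{i,n+j} = (i/2) Σ_a z_{i,a} z_{j,a}`,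
`μ̂_{n+i,j} = −2i Σ_a ∂_{z_{i,a}} ∂_{z_{j,a}}`, `μ̂_{n+i,n+j} = −i Σ_a ∂_{z_{i,a}} ∘ z_{j,a}`. -/
noncomputable def muHatFock (n k : ℕ) :
    Fin n ⊕ Fin n → Fin n ⊕ Fin n → Module.End ℂ (MvPolynomial (Fin n × Fin k) ℂ)
  | Sum.inl i, Sum.inl j =>
      Complex.I • ∑ a : Fin k,
        LinearMap.mulLeft ℂ (MvPolynomial.X (i, a)) *
          (MvPolynomial.pderiv (R := ℂ) (j, a)).toLinearMap
  | Sum.inl i, Sum.inr j =>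
      (Complex.I / 2) •
        LinearMap.mulLeft ℂ (∑ a : Fin k, MvPolynomial.X (i, a) * MvPolynomial.X (j, a))
  | Sum.inr i, Sum.inl j =>
      (-(2 * Complex.I)) • ∑ a : Fin k,
        (MvPolynomial.pderiv (R := ℂ) (i, a)).toLinearMap *
          (MvPolynomial.pderiv (R := ℂ) (j, a)).toLinearMap
  | Sum.inr i, Sum.inr j =>
      (-Complex.I) • ∑ a : Fin k,
        (MvPolynomial.pderiv (R := ℂ) (i, a)).toLinearMap *
          LinearMap.mulLeft ℂ (MvPolynomial.X (j, a))

/-- The Fock model representation `π(X) = (i/2) Σ_{a,b} μ̂_{a,b} X_{b,a}`. -/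
noncomputable def fockRep (n k : ℕ) (X : Matrix (Fin n ⊕ Fin n) (Fin n ⊕ Fin n) ℂ) :
    Module.End ℂ (MvPolynomial (Fin n × Fin k) ℂ) :=
  (Complex.I / 2) • ∑ a : Fin n ⊕ Fin n, ∑ b : Fin n ⊕ Fin n, X b a • muHatFock n k a b

/-- The right-translation operator `ρ(g) : f(z) ↦ f(zg)` determined by
`z_{i,a} ↦ Σ_b z_{i,b} g_{b,a}`. -/
noncomputable def rho (n k : ℕ) (g : Matrix (Fin k) (Fin k) ℂ) :
    MvPolynomial (Fin n × Fin k) ℂ →ₐ[ℂ] MvPolynomial (Fin n × Fin k) ℂ :=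
  MvPolynomial.aeval fun p =>
    ∑ b : Fin k, MvPolynomial.X (p.1, b) * MvPolynomial.C (g b p.2)

/-- The canonical variables `z` and `-2∂`. -/
noncomputable def Wop (n k : ℕ) :
    Fin n ⊕ Fin n → Fin k → Module.End ℂ (MvPolynomial (Fin n × Fin k) ℂ)
  | Sum.inl i, a => LinearMap.mulLeft ℂ (MvPolynomial.X (i, a))
  | Sum.inr i, a => (-2 : ℂ) • (MvPolynomial.pderiv (R := ℂ) (i, a)).toLinearMap

theorem pderiv_comm' {σ : Type*} (i j : σ) (f : MvPolynomial σ ℂ) :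
    pderiv i (pderiv j f) = pderiv j (pderiv i f) := by
  classical
  have h : ⁅pderiv (R := ℂ) i, pderiv (R := ℂ) j⁆ = 0 := by
    apply MvPolynomial.derivation_ext
    intro l
    rw [Derivation.commutator_apply]
    simp only [pderiv_X, Pi.single_apply]
    split_ifs <;> simp
  have := congrArg (fun D => D f) h
  simp only [Derivation.commutator_apply] at this
  exact sub_eq_zero.mp this

theorem Wop_comm (n k : ℕ) (A B : Fin n ⊕ Fin n) (a b : Fin k) :
    Wop n k A a * Wop n k B b = Wop n k B b * Wop n k A a
      + (if a = b then 2 * Jmat n A B else 0) • (1 : Module.End ℂ _) := by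
  rcases A with i | i <;> rcases B with j | j <;> apply LinearMap.ext <;> intro f
  · simp [Wop, Jmat]; ring
  · simp only [Wop, Jmat, Module.End.mul_apply, LinearMap.add_apply, LinearMap.smul_apply,
      LinearMap.mulLeft_apply, Derivation.coeFn_coe,
      Derivation.leibniz, pderiv_X, Module.End.one_apply, Matrix.fromBlocks_apply₁₂,
      Pi.single_apply, Prod.mk.injEq, Matrix.one_apply, smul_eq_mul]
    by_cases h : i = j <;> by_cases h' : a = b <;>
      simp [h, h', smul_eq_C_mul] <;> ring
  · simp only [Wop, Jmat, Module.End.mul_apply, LinearMap.add_apply, LinearMap.smul_apply,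
      LinearMap.mulLeft_apply, Derivation.coeFn_coe,
      Derivation.leibniz, pderiv_X, Module.End.one_apply, Matrix.fromBlocks_apply₂₁,
      Pi.single_apply, Prod.mk.injEq, Matrix.one_apply, smul_eq_mul, Matrix.neg_apply]
    by_cases h : i = j <;> by_cases h' : a = b <;>
      simp [h, h', eq_comm (a := j), eq_comm (a := b), smul_eq_C_mul] <;> ring
  · simp [Wop, Jmat, pderiv_comm' (i, a) (j, b)]

/-- Quadratic element attached to a matrix. -/
noncomputable def Qop (n k : ℕ) (S : Matrix (Fin n ⊕ Fin n) (Fin n ⊕ Fin n) ℂ) :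
    Module.End ℂ (MvPolynomial (Fin n × Fin k) ℂ) :=
  ∑ a : Fin k, ∑ A, ∑ C, S A C • (Wop n k A a * Wop n k C a)

theorem J_sum {M : Type*} [AddCommGroup M] [Module ℂ M] (n : ℕ) (B : Fin n ⊕ Fin n)
    (F : Fin n ⊕ Fin n → M) :
    ∑ C, Jmat n C B • F C = Sum.elim (fun j => -F (Sum.inr j)) (fun j => F (Sum.inl j)) B := by
  rcases B with j | j <;>
    simp [Jmat, Fintype.sum_sum_type, Matrix.one_apply, ite_smul]

theorem muHat_eq (n k : ℕ) (A B : Fin n ⊕ Fin n) :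
    muHatFock n k A B =
      (Complex.I / 2) • ∑ a : Fin k, ∑ C, Jmat n C B • (Wop n k A a * Wop n k C a) := by
  rw [Finset.sum_congr rfl fun a _ => J_sum n B fun C => Wop n k A a * Wop n k C a]
  rcases A with i | i <;> rcases B with j | j <;>
    simp only [muHatFock, Wop, Sum.elim_inl, Sum.elim_inr, Finset.smul_sum, mul_smul_comm,
      smul_mul_assoc]
  · refine Finset.sum_congr rfl fun a _ => ?_
    module
  · apply LinearMap.ext; intro f
    simp [Finset.sum_mul, Finset.smul_sum, LinearMap.sum_apply, mul_assoc]
  · refine Finset.sum_congr rfl fun a _ => ?_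
    module
  · refine Finset.sum_congr rfl fun a _ => ?_
    module

theorem fockRep_eq (n k : ℕ) (X : Matrix (Fin n ⊕ Fin n) (Fin n ⊕ Fin n) ℂ) :
    fockRep n k X = (-(1 / 4) : ℂ) • Qop n k (Jmat n * X)ᵀ := by
  have hI : Complex.I / 2 * (Complex.I / 2) = -(1 / 4) := by
    have := Complex.I_mul_I
    linear_combination this / 4
  simp only [fockRep, Qop, muHat_eq, Matrix.transpose_apply, Matrix.mul_apply, Finset.sum_smul,
    Finset.smul_sum, smul_smul]
  conv_rhs => rw [Finset.sum_comm]
  refine Finset.sum_congr rfl fun A _ => ?_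
  rw [Finset.sum_comm]
  refine Finset.sum_congr rfl fun a _ => ?_
  rw [Finset.sum_comm]
  refine Finset.sum_congr rfl fun C _ => Finset.sum_congr rfl fun B _ => ?_
  congr 1
  rw [← hI]
  ring

theorem Q_comm (n k : ℕ) (S : Matrix (Fin n ⊕ Fin n) (Fin n ⊕ Fin n) ℂ) (hS : Sᵀ = S)
    (D : Fin n ⊕ Fin n) (d : Fin k) :
    Qop n k S * Wop n k D d = Wop n k D d * Qop n k S
      + (4 : ℂ) • ∑ A, (S * Jmat n) A D • Wop n k A d := by
  have h1 : ∀ A C (a : Fin k), Wop n k A a * Wop n k C a * Wop n k D d =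
      Wop n k D d * (Wop n k A a * Wop n k C a)
      + ((if a = d then 2 * Jmat n C D else 0) • Wop n k A a
        + (if a = d then 2 * Jmat n A D else 0) • Wop n k C a) := by
    intro A C a
    rw [mul_assoc, Wop_comm n k C D, mul_add, ← mul_assoc, Wop_comm n k A D, add_mul]
    simp only [mul_smul_comm, smul_mul_assoc, mul_one, one_mul, mul_assoc]
    abel
  have hS' : ∀ A C, S A C = S C A := fun A C => congrFun (congrFun hS C) A
  simp only [Qop, Finset.sum_mul, Finset.mul_sum, smul_mul_assoc, mul_smul_comm, h1, smul_add,
    Finset.sum_add_distrib]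
  congr 1
  simp only [ite_smul, zero_smul, smul_ite, smul_zero]
  have e1 : ∑ a : Fin k, ∑ A, ∑ C, (if a = d then S A C • (2 * Jmat n C D) • Wop n k A a else 0)
      = (2 : ℂ) • ∑ A, (S * Jmat n) A D • Wop n k A d := by
    rw [Finset.sum_eq_single d (by intro b _ hb; simp [hb]) (by simp)]
    simp only [if_true, Matrix.mul_apply, Finset.sum_smul, Finset.smul_sum, smul_smul]
    refine Finset.sum_congr rfl fun A _ => Finset.sum_congr rfl fun C _ => ?_
    congr 1; ring
  have e2 : ∑ a : Fin k, ∑ A, ∑ C, (if a = d then S A C • (2 * Jmat n A D) • Wop n k C a else 0)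
      = (2 : ℂ) • ∑ A, (S * Jmat n) A D • Wop n k A d := by
    rw [← e1]
    refine Finset.sum_congr rfl fun a _ => ?_
    rw [Finset.sum_comm]
    refine Finset.sum_congr rfl fun A _ => Finset.sum_congr rfl fun C _ => ?_
    rw [hS']
  rw [e1, e2]
  module

theorem QQ_aux (n k : ℕ) (T M : Matrix (Fin n ⊕ Fin n) (Fin n ⊕ Fin n) ℂ)
    (P : Module.End ℂ (MvPolynomial (Fin n × Fin k) ℂ))
    (hP : ∀ A C (a : Fin k), P * (Wop n k A a * Wop n k C a) =
      Wop n k A a * Wop n k C a * P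
      + ((4 : ℂ) • ∑ B, M B A • (Wop n k B a * Wop n k C a)
        + (4 : ℂ) • ∑ B, M B C • (Wop n k A a * Wop n k B a))) :
    P * Qop n k T = Qop n k T * P + (4 : ℂ) • Qop n k (M * T + T * Mᵀ) := by
  have e : Qop n k (M * T + T * Mᵀ) = Qop n k (M * T) + Qop n k (T * Mᵀ) := by
    simp only [Qop, Matrix.add_apply, add_smul, Finset.sum_add_distrib]
  have e1 : ∑ a : Fin k, ∑ A, ∑ C, T A C • (4 : ℂ) • ∑ B, M B A • (Wop n k B a * Wop n k C a)
      = (4 : ℂ) • Qop n k (M * T) := by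
    simp only [Qop, Finset.smul_sum, Matrix.mul_apply, Finset.sum_smul, smul_smul]
    refine Finset.sum_congr rfl fun a _ => ?_
    calc _ = ∑ A, ∑ B, ∑ C, (T A C * (4 * M B A)) • (Wop n k B a * Wop n k C a) :=
          Finset.sum_congr rfl fun A _ => Finset.sum_comm
      _ = ∑ B, ∑ A, ∑ C, (T A C * (4 * M B A)) • (Wop n k B a * Wop n k C a) := Finset.sum_comm
      _ = ∑ B, ∑ C, ∑ A, (T A C * (4 * M B A)) • (Wop n k B a * Wop n k C a) :=
          Finset.sum_congr rfl fun A _ => Finset.sum_comm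
      _ = _ := by
          refine Finset.sum_congr rfl fun A _ => Finset.sum_congr rfl fun C _ =>
            Finset.sum_congr rfl fun B _ => ?_
          congr 1; ring
  have e2 : ∑ a : Fin k, ∑ A, ∑ C, T A C • (4 : ℂ) • ∑ B, M B C • (Wop n k A a * Wop n k B a)
      = (4 : ℂ) • Qop n k (T * Mᵀ) := by
    simp only [Qop, Finset.smul_sum, Matrix.mul_apply, Finset.sum_smul, smul_smul,
      Matrix.transpose_apply]
    refine Finset.sum_congr rfl fun a _ => Finset.sum_congr rfl fun A _ => ?_
    rw [Finset.sum_comm]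
    refine Finset.sum_congr rfl fun C _ => Finset.sum_congr rfl fun B _ => ?_
    congr 1; ring
  rw [e, smul_add, ← e1, ← e2]
  simp only [Qop, Finset.mul_sum, Finset.sum_mul, mul_smul_comm, smul_mul_assoc, hP, smul_add,
    Finset.sum_add_distrib]

theorem QQ_comm (n k : ℕ) (S T : Matrix (Fin n ⊕ Fin n) (Fin n ⊕ Fin n) ℂ) (hS : Sᵀ = S) :
    Qop n k S * Qop n k T - Qop n k T * Qop n k S
      = (4 : ℂ) • Qop n k (S * Jmat n * T + T * (S * Jmat n)ᵀ) := by
  set M := S * Jmat n with hM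
  have h1 : ∀ A C (a : Fin k), Qop n k S * (Wop n k A a * Wop n k C a) =
      Wop n k A a * Wop n k C a * Qop n k S
      + ((4 : ℂ) • ∑ B, M B A • (Wop n k B a * Wop n k C a)
        + (4 : ℂ) • ∑ B, M B C • (Wop n k A a * Wop n k B a)) := by
    intro A C a
    rw [← mul_assoc, Q_comm n k S hS, add_mul, mul_assoc, Q_comm n k S hS, mul_add]
    simp only [Finset.sum_mul, Finset.mul_sum, smul_mul_assoc, mul_smul_comm, mul_assoc, ← hM]
    abel
  have h2 : ∀ P : Module.End ℂ (MvPolynomial (Fin n × Fin k) ℂ),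
      (∀ A C (a : Fin k), P * (Wop n k A a * Wop n k C a) =
      Wop n k A a * Wop n k C a * P
      + ((4 : ℂ) • ∑ B, M B A • (Wop n k B a * Wop n k C a)
        + (4 : ℂ) • ∑ B, M B C • (Wop n k A a * Wop n k B a))) →
      P * Qop n k T = Qop n k T * P + (4 : ℂ) • Qop n k (M * T + T * Mᵀ) := by
    intro P hP
    exact QQ_aux n k T M P hP
  rw [h2 _ h1]
  exact add_sub_cancel_left _ _

theorem Jmat_sq (n : ℕ) : Jmat n * Jmat n = -1 := by
  simp [Jmat, Matrix.fromBlocks_multiply, ← Matrix.fromBlocks_one, Matrix.fromBlocks_neg]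

theorem Jmat_tr (n : ℕ) : (Jmat n)ᵀ = -Jmat n := by
  simp [Jmat, Matrix.fromBlocks_transpose, Matrix.fromBlocks_neg]

theorem JX_symm (n : ℕ) (X : Matrix (Fin n ⊕ Fin n) (Fin n ⊕ Fin n) ℂ)
    (h : Xᵀ * Jmat n + Jmat n * X = 0) : (Jmat n * X)ᵀ = Jmat n * X := by
  rw [Matrix.transpose_mul, Jmat_tr, mul_neg]
  exact neg_eq_of_add_eq_zero_right h

theorem Qop_smul (n k : ℕ) (c : ℂ) (S : Matrix (Fin n ⊕ Fin n) (Fin n ⊕ Fin n) ℂ) :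
    Qop n k (c • S) = c • Qop n k S := by
  simp [Qop, Finset.smul_sum, smul_smul]

theorem rho_pderiv (n k : ℕ) (g : Matrix (Fin k) (Fin k) ℂ) (i : Fin n) (b : Fin k)
    (f : MvPolynomial (Fin n × Fin k) ℂ) :
    pderiv (i, b) (rho n k g f) = ∑ a, g b a • rho n k g (pderiv (i, a) f) := by
  classical
  induction f using MvPolynomial.induction_on with
  | C r => simp [rho]
  | add p q hp hq => simp [hp, hq, Finset.sum_add_distrib]
  | mul_X p q hp =>
    obtain ⟨j, c⟩ := q
    have hX : pderiv (i, b) (rho n k g (X (j, c))) =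
        ∑ a, g b a • rho n k g (pderiv (i, a) (X (j, c))) := by
      simp only [rho, aeval_X, map_sum, Derivation.leibniz, pderiv_C, pderiv_X, Pi.single_apply,
        Prod.mk.injEq, smul_zero, zero_add, smul_eq_mul]
      by_cases h : j = i <;> simp [h, smul_eq_C_mul, apply_ite]
    simp only [map_mul, Derivation.leibniz, hp, hX, map_add, smul_eq_mul, smul_add,
      Finset.sum_add_distrib, Finset.mul_sum, mul_smul_comm]

theorem rho_W (n k : ℕ) (g : Matrix (Fin k) (Fin k) ℂ) (hg : gᵀ * g = 1)
    (A : Fin n ⊕ Fin n) (a : Fin k) :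
    (rho n k g).toLinearMap ∘ₗ Wop n k A a
      = (∑ b, g b a • Wop n k A b) ∘ₗ (rho n k g).toLinearMap := by
  apply LinearMap.ext; intro f
  rcases A with i | i
  · simp [Wop, rho, Finset.sum_mul, LinearMap.sum_apply, smul_eq_C_mul]
    refine Finset.sum_congr rfl fun b _ => ?_
    ring
  · have h : ∀ c, ∑ b, g b a * g b c = if a = c then 1 else 0 := by
      intro c
      have := congrFun (congrFun hg a) c
      simpa [Matrix.mul_apply, Matrix.one_apply] using this
    have : ∑ b, g b a • pderiv (i, b) (rho n k g f) = rho n k g (pderiv (i, a) f) := by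
      simp only [rho_pderiv, Finset.smul_sum, smul_smul]
      rw [Finset.sum_comm]
      simp only [← Finset.sum_smul, h]
      simp
    simp only [Wop, LinearMap.comp_apply, LinearMap.sum_apply, LinearMap.smul_apply,
      AlgHom.toLinearMap_apply, Derivation.coeFn_coe, map_smul,
      ← this, Finset.smul_sum]
    refine Finset.sum_congr rfl fun b _ => ?_
    rw [smul_comm]

theorem rho_Q (n k : ℕ) (g : Matrix (Fin k) (Fin k) ℂ) (hg : gᵀ * g = 1)
    (S : Matrix (Fin n ⊕ Fin n) (Fin n ⊕ Fin n) ℂ) :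
    (rho n k g).toLinearMap * Qop n k S = Qop n k S * (rho n k g).toLinearMap := by
  have hg' : g * gᵀ = 1 := mul_eq_one_comm.mp hg
  have h : ∀ b c, ∑ a, g b a * g c a = if b = c then 1 else 0 := by
    intro b c
    have := congrFun (congrFun hg' b) c
    simpa [Matrix.mul_apply, Matrix.one_apply] using this
  have hW : ∀ A a, (rho n k g).toLinearMap * Wop n k A a
      = (∑ b, g b a • Wop n k A b) * (rho n k g).toLinearMap := rho_W n k g hg
  have key : ∀ A C, ∑ a, (∑ b, g b a • Wop n k A b) * (∑ c, g c a • Wop n k C c)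
      = ∑ a, Wop n k A a * Wop n k C a := by
    intro A C
    simp only [Finset.sum_mul_sum, smul_mul_smul_comm]
    rw [Finset.sum_comm]
    refine Finset.sum_congr rfl fun b _ => ?_
    rw [Finset.sum_comm]
    simp only [← Finset.sum_smul, h]
    simp
  have hQ : Qop n k S = ∑ A, ∑ C, S A C • ∑ a, Wop n k A a * Wop n k C a := by
    rw [Qop, Finset.sum_comm]
    refine Finset.sum_congr rfl fun A _ => ?_
    rw [Finset.sum_comm]
    simp only [Finset.smul_sum]
  rw [hQ]
  simp only [Finset.mul_sum, Finset.sum_mul, mul_smul_comm, smul_mul_assoc]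
  refine Finset.sum_congr rfl fun A _ => Finset.sum_congr rfl fun C _ => ?_
  congr 1
  rw [← Finset.sum_mul, ← key, Finset.sum_mul]
  refine Finset.sum_congr rfl fun a _ => ?_
  rw [← mul_assoc, hW, mul_assoc, hW, mul_assoc]

theorem fockRep_lie_hom_and_Ok_invariant (n k : ℕ) (hn : 1 ≤ n) (hk : 1 ≤ k) :
    -- (a) `π` is a Lie algebra homomorphism on `sp_n(ℂ)` (the Fock model of the
    -- oscillator representation)
    (∀ X Y : Matrix (Fin n ⊕ Fin n) (Fin n ⊕ Fin n) ℂ,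
      Xᵀ * Jmat n + Jmat n * X = 0 → Yᵀ * Jmat n + Jmat n * Y = 0 →
      fockRep n k X * fockRep n k Y - fockRep n k Y * fockRep n k X
        = fockRep n k (X * Y - Y * X)) ∧
    -- (b) `π(X)` commutes with the action of `O_k(ℂ)`
    (∀ g : Matrix (Fin k) (Fin k) ℂ, gᵀ * g = 1 →
      ∀ X : Matrix (Fin n ⊕ Fin n) (Fin n ⊕ Fin n) ℂ,
        Xᵀ * Jmat n + Jmat n * X = 0 →
        (rho n k g).toLinearMap ∘ₗ fockRep n k X
          = fockRep n k X ∘ₗ (rho n k g).toLinearMap) := by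
  refine ⟨fun X Y hX hY => ?_, fun g hg X _ => ?_⟩
  · have sX := JX_symm n X hX
    have sY := JX_symm n Y hY
    simp only [fockRep_eq, smul_mul_smul_comm]
    refine (smul_sub _ _ _).symm.trans ?_
    rw [QQ_comm n k _ _ (by rw [Matrix.transpose_transpose, sX]), smul_smul, sX, sY]
    have e : Jmat n * X * Jmat n * (Jmat n * Y) + Jmat n * Y * (Jmat n * X * Jmat n)ᵀ
        = (-1 : ℂ) • (Jmat n * (X * Y - Y * X)) := by
      rw [Matrix.transpose_mul, sX, Jmat_tr, neg_mul, ← mul_assoc (Jmat n) (Jmat n) X, Jmat_sq,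
        mul_assoc (Jmat n * X), ← mul_assoc (Jmat n) (Jmat n) Y, Jmat_sq]
      simp only [neg_mul, one_mul, mul_neg, neg_neg, mul_sub, neg_smul, one_smul, mul_assoc]
      abel
    have e' : (Jmat n * (X * Y - Y * X))ᵀ = Jmat n * (X * Y - Y * X) := by
      have h1 : (Jmat n * (X * Y))ᵀ = -(Jmat n * (Y * X)) := by
        have hX' : Xᵀ * Jmat n = -(Jmat n * X) := eq_neg_of_add_eq_zero_left hX
        rw [← mul_assoc, sX.symm, Matrix.transpose_mul, Matrix.transpose_transpose]
        have hY' : Yᵀ * Jmat n = -(Jmat n * Y) := eq_neg_of_add_eq_zero_left hY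
        rw [← mul_assoc, hY', neg_mul, mul_assoc]
      have h2 : (Jmat n * (Y * X))ᵀ = -(Jmat n * (X * Y)) := by
        rw [← Matrix.transpose_transpose (Jmat n * (X * Y)), h1]
        simp
      rw [mul_sub, Matrix.transpose_sub, h1, h2]
      abel
    rw [e, e', Qop_smul, smul_smul]
    congr 1
    norm_num
  · rw [fockRep_eq]
    have := rho_Q n k g hg (Jmat n * X)ᵀ
    change (rho n k g).toLinearMap * _ = _ * (rho n k g).toLinearMap
    rw [mul_smul_comm, smul_mul_assoc, this]
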